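/- The series Σ_{k=0}^∞ (−1/4)^k · ((9/2)_k)^5 / (((1)_k)^4 · (5)_k) · (20k² + 72k + 81) converges and equals 2^18 / (35π²). -/

import Mathlib

/-!
Put `n = m + 4`. Up to a constant, the `m`-th term of the series is the `n`-th term of Guillera's
WZ family
`(-1/4)^n (1/2)_n^5 / n! * ((1/2)_k / (n + k)!)^4 * (20n² + 8n + 1 + 24nk + 8k² + 4k)`
at `k = -4`, where the reciprocal factorial `1 / (n - 4)!` is read as zero for `n < 4`.
With `j = k + 4` and `(1/2)_k` replaced by its multiple `(-7/2)_j`, this gives a function `F n j`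
defined for all natural `n`, `j`. It has a WZ mate `G`, with
`F n (j+1) - F n j = G (n+1) j - G n j`, `G 0 j = 0` and `G n j → 0` as `n → ∞`
(`F_sub_F`, `tendsto_G`), so the sum of `F n j` over `n` does not depend on `j`.
As `j → ∞` only the term `n = 0` survives (`tendsto_F`), the passage to the limit being justified
by dominated convergence (`abs_F_le`); Wallis' product evaluates that term and produces `1 / π²`.
-/

/-- The Pochhammer symbol `(x)_k = x (x+1) ⋯ (x+k-1) = Γ(x+k)/Γ(x)`. -/
noncomputable def poch (x : ℝ) (k : ℕ) : ℝ := ∏ i ∈ Finset.range k, (x + i)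

namespace Series92

open Filter Topology

/-! ### Pochhammer symbols and reciprocal factorials -/

lemma poch_succ (x : ℝ) (k : ℕ) : poch x (k + 1) = poch x k * (x + k) := by
  simp [poch, Finset.prod_range_succ]

lemma poch_zero (x : ℝ) : poch x 0 = 1 := by simp [poch]

lemma poch_add_four (x : ℝ) (k : ℕ) :
    poch x (k + 4) = x * (x + 1) * (x + 2) * (x + 3) * poch (x + 4) k := by
  induction k with
  | zero => simp [poch, Finset.prod_range_succ]
  | succ k ih =>
    rw [show k + 1 + 4 = (k + 4) + 1 by ring, poch_succ, ih, poch_succ]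
    push_cast
    ring

lemma poch_one (k : ℕ) : poch 1 k = (k.factorial : ℝ) := by
  induction k with
  | zero => simp [poch]
  | succ k ih => rw [poch_succ, ih, Nat.factorial_succ]; push_cast; ring

/-- The normalised ratio `(1/2)_n / n!`. -/
noncomputable def u (n : ℕ) : ℝ := poch (1/2) n / n.factorial

lemma u_succ (n : ℕ) : (n + 1) * u (n + 1) = (n + 1/2) * u n := by
  have : (n.factorial : ℝ) ≠ 0 := by positivity
  have h1 : (n : ℝ) + 1 ≠ 0 := by positivity
  rw [u, u, poch_succ, Nat.factorial_succ]
  push_cast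
  field_simp
  ring

lemma u_pos (n : ℕ) : 0 < u n :=
  div_pos (Finset.prod_pos fun i _ => by positivity) (by positivity)

lemma u_le_one (n : ℕ) : u n ≤ 1 := by
  induction n with
  | zero => simp [u, poch]
  | succ n ih =>
    have h := u_succ n
    have hp := u_pos n
    have h1 : (0 : ℝ) < n + 1 := by positivity
    by_contra! hc
    nlinarith

/-- The reciprocal factorial `1 / (m - 4)!`, extended by zero to `m < 4`. -/
noncomputable def w (m : ℕ) : ℝ := (m * (m - 1) * (m - 2) * (m - 3)) / m.factorial

lemma w_succ (m : ℕ) : ((m : ℝ) - 3) * w (m + 1) = w m := by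
  have : (m.factorial : ℝ) ≠ 0 := by positivity
  have h1 : (m : ℝ) + 1 ≠ 0 := by positivity
  rw [w, w, Nat.factorial_succ]
  push_cast
  field_simp
  ring

lemma w_add_four (m : ℕ) : w (m + 4) = 1 / m.factorial := by
  have : (m.factorial : ℝ) ≠ 0 := by positivity
  have h1 : (m : ℝ) + 1 ≠ 0 := by positivity
  have h2 : (m : ℝ) + 1 + 1 ≠ 0 := by positivity
  have h3 : (m : ℝ) + 2 + 1 ≠ 0 := by positivity
  have h4 : (m : ℝ) + 3 + 1 ≠ 0 := by positivity
  simp only [w, Nat.factorial_succ]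
  push_cast
  field_simp
  ring

lemma abs_w_le (m : ℕ) : |w m| ≤ (m + 3) ^ 4 / m.factorial := by
  have hm : (0 : ℝ) ≤ m := by positivity
  rw [w, abs_div, abs_of_pos (show (0 : ℝ) < m.factorial by positivity)]
  gcongr
  simp only [abs_mul]
  have h0 : |(m : ℝ)| ≤ m + 3 := by rw [abs_le]; constructor <;> linarith
  have h1 : |(m : ℝ) - 1| ≤ m + 3 := by rw [abs_le]; constructor <;> linarith
  have h2 : |(m : ℝ) - 2| ≤ m + 3 := by rw [abs_le]; constructor <;> linarith
  have h3 : |(m : ℝ) - 3| ≤ m + 3 := by rw [abs_le]; constructor <;> linarith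
  calc |(m : ℝ)| * |(m : ℝ) - 1| * |(m : ℝ) - 2| * |(m : ℝ) - 3|
      ≤ (m + 3) * (m + 3) * (m + 3) * (m + 3) := by gcongr
    _ = _ := by ring

/-! ### The WZ pair -/

/-- The hypergeometric factor common to both members of the WZ pair. -/
noncomputable def B (n j : ℕ) : ℝ :=
  (-1/4) ^ n * u n ^ 5 * (n.factorial * w (n + j) * poch (-7/2) j) ^ 4

/-- The polynomial factor of the summand, with `k = j - 4`. -/
noncomputable def P (n k : ℝ) : ℝ := 20 * n ^ 2 + 8 * n + 1 + 24 * n * k + 8 * k ^ 2 + 4 * k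

/-- The WZ summand. -/
noncomputable def F (n j : ℕ) : ℝ := B n j * P n (j - 4)

/-- The WZ mate of `F`. -/
noncomputable def G (n j : ℕ) : ℝ := B n j * (8 * n * (2 * n + 4 * (j - 4) + 1))

/-- The WZ equation. After division by the common hypergeometric factor it is a polynomial
identity in `n` and `j`. -/
lemma F_sub_F (n j : ℕ) : F n (j + 1) - F n j = G (n + 1) j - G n j := by
  have hw := w_succ (n + j)
  have hu := u_succ n
  have hn : (n : ℝ) + 1 ≠ 0 := by positivity
  have hu' : u (n + 1) = (n + 1/2) * u n / (n + 1) := by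
    field_simp
    linear_combination 2 * hu
  have e : n + 1 + j = n + j + 1 := by ring
  have e' : n + (j + 1) = n + j + 1 := by ring
  simp only [F, G, B, P, e, e', poch_succ, Nat.factorial_succ, ← hw, hu', pow_succ (-1/4 : ℝ) n]
  push_cast
  generalize w (n + j + 1) = W
  generalize (n.factorial : ℝ) = f
  generalize poch (-7/2) j = p
  generalize u n = v
  generalize (-1/4 : ℝ) ^ n = r
  field_simp
  ring

/-! ### Summability, and independence of the sum from `j` -/

/-- The factor `n! * w (n + j)` grows polynomially in `n`, so `B n j` decays like `(1/4)^n`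
up to a polynomial. -/
lemma summable_B (j : ℕ) (p : ℕ → ℝ) (C : ℝ) (hp : ∀ n, |p n| ≤ C * ((n : ℝ) + 1) ^ 2) :
    Summable fun n => B n j * p n := by
  have hs : Summable fun n : ℕ => ((n : ℝ) + 1) ^ 18 * (1/4 : ℝ) ^ n := by
    have h := summable_pow_mul_geometric_of_norm_lt_one (R := ℝ) 18 (r := 1/4) (by norm_num)
    have h' := ((summable_nat_add_iff 1).2 h).mul_left 4
    refine h'.congr fun n => ?_
    push_cast
    ring
  refine Summable.of_norm_bounded
    (g := fun n : ℕ => ((j + 3) ^ 16 * poch (-7/2) j ^ 4 * C) * (((n : ℝ) + 1) ^ 18 * (1/4 : ℝ) ^ n))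
    (hs.mul_left _) fun n => ?_
  have hn : (0 : ℝ) ≤ n := by positivity
  have hj : (0 : ℝ) ≤ j := by positivity
  have hfw : |(n.factorial : ℝ) * w (n + j)| ≤ ((n + 1) * (j + 3)) ^ 4 := by
    rw [abs_mul, abs_of_pos (show (0 : ℝ) < n.factorial by positivity)]
    have hf : (n.factorial : ℝ) ≤ (n + j).factorial := by
      exact_mod_cast Nat.factorial_le (by omega)
    calc (n.factorial : ℝ) * |w (n + j)|
        ≤ (n + j).factorial * (((n + j : ℕ) + 3) ^ 4 / (n + j).factorial) := by
          gcongr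
          exact abs_w_le _
      _ = ((n : ℝ) + j + 3) ^ 4 := by
          push_cast
          field_simp
      _ ≤ _ := by
          gcongr
          nlinarith
  have hC : 0 ≤ C := by
    have := (abs_nonneg _).trans (hp 0)
    simpa using this
  have hu : |u n| ≤ 1 := by
    rw [abs_of_pos (u_pos n)]
    exact u_le_one n
  rw [Real.norm_eq_abs, B, abs_mul, abs_mul, abs_mul, abs_pow, abs_pow, abs_pow, abs_mul]
  have hq : |poch (-7/2) j| ^ 4 = poch (-7/2) j ^ 4 := Even.pow_abs ⟨2, rfl⟩ _
  have hr : |(-1/4 : ℝ)| = 1/4 := by norm_num [abs_div]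
  rw [hr, mul_pow |(n.factorial : ℝ) * w (n + j)|, hq]
  calc (1/4 : ℝ) ^ n * |u n| ^ 5 * (|(n.factorial : ℝ) * w (n + j)| ^ 4 * poch (-7/2) j ^ 4) * |p n|
      ≤ (1/4 : ℝ) ^ n * 1 ^ 5 * ((((n + 1) * (j + 3)) ^ 4) ^ 4 * poch (-7/2) j ^ 4)
          * (C * ((n : ℝ) + 1) ^ 2) := by
        gcongr
        exact hp n
    _ = _ := by ring

lemma summable_F (j : ℕ) : Summable fun n => F n j := by
  refine summable_B j (fun n => P n (j - 4))
    (29 + 24 * |(j : ℝ) - 4| + 8 * |(j : ℝ) - 4| ^ 2 + 4 * |(j : ℝ) - 4|) fun n => ?_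
  have hn : (0 : ℝ) ≤ n := by positivity
  generalize (j : ℝ) - 4 = k
  have ha := abs_nonneg k
  have h1 := le_abs_self k
  have h2 := neg_abs_le k
  rw [P, ← sq_abs k, abs_le]
  constructor <;> nlinarith [mul_nonneg hn ha, mul_nonneg hn (mul_nonneg hn ha),
    mul_nonneg hn (sq_nonneg k), mul_nonneg hn (sub_nonneg.2 h1), sq_nonneg |k|,
    mul_nonneg hn (sub_nonneg.2 h2), mul_nonneg hn (sq_nonneg |k|),
    mul_nonneg hn (mul_nonneg hn (sq_nonneg |k|))]

lemma tendsto_G (j : ℕ) : Tendsto (fun n => G n j) atTop (𝓝 0) := by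
  refine (summable_B j (fun n => 8 * n * (2 * n + 4 * (j - 4) + 1))
    (8 * (3 + 4 * |(j : ℝ) - 4|)) fun n => ?_).tendsto_atTop_zero
  have hn : (0 : ℝ) ≤ n := by positivity
  generalize (j : ℝ) - 4 = k
  have ha := abs_nonneg k
  have h1 := le_abs_self k
  have h2 := neg_abs_le k
  rw [abs_le]
  constructor <;> nlinarith [mul_nonneg hn ha, mul_nonneg hn (mul_nonneg hn ha),
    mul_nonneg hn (sub_nonneg.2 h1), mul_nonneg hn (sub_nonneg.2 h2)]

lemma tsum_F_succ (j : ℕ) : ∑' n, F n (j + 1) = ∑' n, F n j := by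
  have h1 := ((summable_F (j + 1)).hasSum.sub (summable_F j).hasSum).tendsto_sum_nat
  have h2 : Tendsto (fun N => ∑ n ∈ Finset.range N, (F n (j + 1) - F n j)) atTop (𝓝 0) := by
    refine (tendsto_G j).congr fun N => ?_
    simp only [F_sub_F, Finset.sum_range_sub (fun n => G n j)]
    simp [G]
  exact sub_eq_zero.1 (tendsto_nhds_unique h1 h2)

lemma tsum_F (j : ℕ) : ∑' n, F n j = ∑' n, F n 0 := by
  induction j with
  | zero => rfl
  | succ j ih => rw [tsum_F_succ, ih]

/-! ### The limit `j → ∞` -/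

/-- Wallis' product in terms of the ratios `u`. -/
lemma u_sq_eq (k : ℕ) : u k ^ 2 * (2 * k + 1) = (Real.Wallis.W k)⁻¹ := by
  induction k with
  | zero => simp [u, poch, Real.Wallis.W]
  | succ k ih =>
    have h := u_succ k
    have hk : (k : ℝ) + 1 ≠ 0 := by positivity
    have hu' : u (k + 1) = (k + 1/2) * u k / (k + 1) := by
      field_simp
      linear_combination 2 * h
    have h1 : (2 * k + 1 : ℝ) ≠ 0 := by positivity
    have h3 : (2 * k + 3 : ℝ) ≠ 0 := by positivity
    rw [Real.Wallis.W_succ, mul_inv, ← ih, hu']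
    push_cast
    field_simp
    ring

/-- The Beta-like factor `n! k! / (n + k)!`. -/
noncomputable def b (n k : ℕ) : ℝ := n.factorial * k.factorial / (n + k).factorial

lemma b_nonneg (n k : ℕ) : 0 ≤ b n k := by unfold b; positivity

lemma b_le_one (n k : ℕ) : b n k ≤ 1 := by
  rw [b, div_le_one (by positivity)]
  exact_mod_cast Nat.le_of_dvd (by positivity) (Nat.factorial_mul_factorial_dvd_factorial_add n k)

lemma b_succ_le (n k : ℕ) : b (n + 1) k ≤ (n + 1) * (1 / ((k : ℝ) + 1)) := by
  have h := b_le_one n (k + 1)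
  have e : n + 1 + k = n + (k + 1) := by ring
  have : b (n + 1) k = (n + 1) * (b n (k + 1) / (k + 1)) := by
    have hk : (k : ℝ) + 1 ≠ 0 := by positivity
    rw [b, b, e, Nat.factorial_succ, Nat.factorial_succ k]
    push_cast
    field_simp
  rw [this]
  gcongr

/-- The summand at `j = k + 4`, split into factors that are bounded uniformly in `k`. -/
lemma F_add_four (n k : ℕ) : F n (k + 4) = (105/16) ^ 4 * ((-1/4) ^ n * u n ^ 5 * b n k ^ 4 *
    (u k ^ 2 * (2 * k + 1)) ^ 2 * (P n k / (2 * k + 1) ^ 2)) := by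
  have h1 : (2 * k + 1 : ℝ) ≠ 0 := by positivity
  have hk : (k.factorial : ℝ) ≠ 0 := by positivity
  have hp : poch (-7/2) (k + 4) = 105/16 * (u k * k.factorial) := by
    rw [poch_add_four, u]
    norm_num
    field_simp
  rw [F, B, hp, ← add_assoc, w_add_four, b]
  push_cast
  rw [add_sub_cancel_right]
  field_simp

lemma abs_F_le (n k : ℕ) :
    ‖F n (k + 4)‖ ≤ (105/16) ^ 4 * ((1/4) ^ n * (20 * n ^ 2 + 32 * n + 13)) := by
  have hk : (0 : ℝ) ≤ k := by positivity
  have hn : (0 : ℝ) ≤ n := by positivity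
  have hu := u_pos n
  have hb := b_nonneg n k
  have hv : (0 : ℝ) ≤ u k ^ 2 * (2 * k + 1) := by positivity
  have hv1 : u k ^ 2 * (2 * k + 1) ≤ 1 := by
    induction k with
    | zero => simp [u, poch]
    | succ k ih =>
      have h := u_succ k
      have hk : (k : ℝ) + 1 ≠ 0 := by positivity
      have hu' : u (k + 1) = (k + 1/2) * u k / (k + 1) := by
        field_simp
        linear_combination 2 * h
      have ih' := ih (by positivity) (b_nonneg n k) (by positivity)
      have e : u (k + 1) ^ 2 * (2 * ((k + 1 : ℕ) : ℝ) + 1) =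
          u k ^ 2 * (2 * k + 1) * ((2 * k + 1) * (2 * k + 3) / (2 * k + 2) ^ 2) := by
        rw [hu']
        push_cast
        field_simp
        ring
      rw [e]
      refine mul_le_one₀ ih' (by positivity) ?_
      rw [div_le_one (by positivity)]
      nlinarith
  have hP : |P n k / (2 * (k : ℝ) + 1) ^ 2| ≤ 20 * (n : ℝ) ^ 2 + 32 * n + 13 := by
    rw [P, abs_of_nonneg (by positivity), div_le_iff₀ (by positivity)]
    nlinarith [mul_nonneg hn hk, mul_nonneg hn (mul_nonneg hn hk), mul_nonneg hn (mul_nonneg hk hk),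
      mul_nonneg (mul_nonneg hn hn) (mul_nonneg hk hk)]
  have hr : |(-1/4 : ℝ)| = 1/4 := by norm_num [abs_div]
  rw [F_add_four, Real.norm_eq_abs, abs_mul, abs_of_pos (show (0 : ℝ) < (105/16) ^ 4 by norm_num),
    abs_mul, abs_mul, abs_mul, abs_mul, abs_pow, abs_pow, abs_pow, abs_pow, hr,
    abs_of_pos hu, abs_of_nonneg hb, abs_of_nonneg hv]
  refine mul_le_mul_of_nonneg_left ?_ (by norm_num)
  calc (1/4 : ℝ) ^ n * u n ^ 5 * b n k ^ 4 * (u k ^ 2 * (2 * k + 1)) ^ 2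
        * |P n k / (2 * k + 1) ^ 2|
      ≤ (1/4 : ℝ) ^ n * 1 ^ 5 * 1 ^ 4 * 1 ^ 2 * (20 * n ^ 2 + 32 * n + 13) := by
        gcongr
        · exact u_le_one n
        · exact b_le_one n k
    _ = _ := by ring

lemma tendsto_P_div (n : ℕ) :
    Tendsto (fun k : ℕ => P n k / (2 * k + 1) ^ 2) atTop (𝓝 2) := by
  have h0 : Tendsto (fun k : ℕ => 1 / ((2 * (k : ℝ)) + 1)) atTop (𝓝 0) := by
    have : Tendsto (fun k : ℕ => 2 * (k : ℝ) + 1) atTop atTop :=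
      tendsto_atTop_add_const_right _ _
        (tendsto_natCast_atTop_atTop.const_mul_atTop (by norm_num))
    exact this.inv_tendsto_atTop.congr fun k => by simp
  -- Expansion of `P n k` in powers of `2 * k + 1`.
  have h : Tendsto (fun k : ℕ => 2 + (12 * (n : ℝ) - 2) * (1 / (2 * (k : ℝ) + 1))
      + (20 * (n : ℝ) ^ 2 - 4 * n + 1) * (1 / (2 * (k : ℝ) + 1)) ^ 2) atTop
      (𝓝 (2 + (12 * (n : ℝ) - 2) * 0 + (20 * (n : ℝ) ^ 2 - 4 * n + 1) * 0 ^ 2)) :=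
    (tendsto_const_nhds.add (h0.const_mul _)).add ((h0.pow 2).const_mul _)
  simp only [mul_zero, add_zero, ne_eq, OfNat.ofNat_ne_zero, not_false_eq_true, zero_pow] at h
  refine h.congr fun k => ?_
  have h1 : (2 * k + 1 : ℝ) ≠ 0 := by positivity
  rw [P]
  field_simp
  ring

lemma tendsto_F (n : ℕ) : Tendsto (fun k => F n (k + 4)) atTop
    (𝓝 (if n = 0 then (105/16) ^ 4 * (8 / Real.pi ^ 2) else 0)) := by
  have hW : Tendsto (fun k : ℕ => u k ^ 2 * (2 * k + 1)) atTop (𝓝 (Real.pi / 2)⁻¹) := by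
    simp only [u_sq_eq]
    exact Real.tendsto_prod_pi_div_two.inv₀ (by positivity)
  have hb : Tendsto (fun k => b n k) atTop (𝓝 (if n = 0 then 1 else 0)) := by
    rcases n with _ | n
    · refine tendsto_const_nhds.congr fun k => ?_
      have : (k.factorial : ℝ) ≠ 0 := by positivity
      simp [b, this]
    · have h := (tendsto_one_div_add_atTop_nhds_zero_nat (𝕜 := ℝ)).const_mul ((n : ℝ) + 1)
      rw [mul_zero] at h
      simpa using squeeze_zero (fun k => b_nonneg (n + 1) k) (b_succ_le n) h
  have h := ((((hb.pow 4).const_mul ((-1/4) ^ n * u n ^ 5)).mul (hW.pow 2)).mul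
    (tendsto_P_div n)).const_mul ((105/16 : ℝ) ^ 4)
  simp only [F_add_four]
  convert h using 2
  split_ifs with hn
  · subst hn
    simp [u, poch]
    field_simp
    norm_num
  · simp

lemma tsum_F_zero : ∑' n, F n 0 = (105/16) ^ 4 * (8 / Real.pi ^ 2) := by
  have hs : Summable fun n : ℕ =>
      ((105/16 : ℝ) ^ 4 * ((1/4) ^ n * (20 * n ^ 2 + 32 * n + 13))) := by
    have h (i : ℕ) :=
      summable_pow_mul_geometric_of_norm_lt_one (R := ℝ) i (r := 1/4) (by norm_num)
    refine ((((h 2).mul_left 20).add ((h 1).mul_left 32)).add ((h 0).mul_left 13)).mul_left ((105/16) ^ 4)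
      |>.congr fun n => ?_
    ring
  have h := tendsto_tsum_of_dominated_convergence hs tendsto_F
    (Eventually.of_forall fun k n => abs_F_le n k)
  simp only [tsum_F, tsum_ite_eq] at h
  exact tendsto_nhds_unique tendsto_const_nhds h

end Series92

open Series92 in
theorem series_92 :
    HasSum
      (fun k : ℕ =>
        (-1/4 : ℝ) ^ k * (poch (9/2) k) ^ 5 / ((poch 1 k) ^ 4 * poch 5 k) *
          (20 * (k : ℝ) ^ 2 + 72 * k + 81))
      (2 ^ 18 / (35 * Real.pi ^ 2)) := by
  have h := (summable_F 0).hasSum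
  rw [tsum_F_zero, ← hasSum_nat_add_iff' 4] at h
  have h0 : ∑ i ∈ Finset.range 4, F i 0 = 0 := by
    simp [Finset.sum_range_succ, F, B, w]
  rw [h0, sub_zero] at h
  -- The constant is `1 / ((-1/4)^4 * (1/2)_4^5 / 4!)`, where `(1/2)_4 = 105/16`.
  have h' := h.mul_left (4 ^ 4 * 24 / (105/16 : ℝ) ^ 5)
  have hc : 4 ^ 4 * 24 / (105/16 : ℝ) ^ 5 * ((105/16) ^ 4 * (8 / Real.pi ^ 2)) =
      2 ^ 18 / (35 * Real.pi ^ 2) := by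
    field_simp
    norm_num
  rw [hc] at h'
  refine h'.congr_fun fun k => ?_
  have h5 : ((k + 4).factorial : ℝ) = 24 * poch 5 k := by
    rw [← poch_one, poch_add_four]
    norm_num
  have h9 : poch (1/2) (k + 4) = 105/16 * poch (9/2) k := by
    rw [poch_add_four]
    norm_num
  have hk : (k.factorial : ℝ) ≠ 0 := by positivity
  have h5' : poch 5 k ≠ 0 := (Finset.prod_pos fun i _ => by positivity).ne'
  rw [F, B, P, u, h9, h5, add_zero, w_add_four, poch_zero, poch_one, pow_add]
  push_cast
  field_simp
  ring
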